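/- Let a₁, a₂, a₃, b₁, b₂, b₃, c₁, c₂, c₃ be nonnegative real numbers, and set A = max(a₁,a₂,a₃), B = max(b₁,b₂,b₃), C = max(c₁,c₂,c₃). Then (1/3)·[(a₁−a₃)(b₂−b₃) − (a₂−a₃)(b₁−b₃) + (b₁−b₃)(c₂−c₃) − (b₂−b₃)(c₁−c₃) + (c₁−c₃)(a₂−a₃) − (c₂−c₃)(a₁−a₃)] ≤ (A + B + C)². -/

import Mathlib

/-!
Each pair of rows contributes a determinant that expands to the positive terms
`x₁ y₂ + x₂ y₃ + x₃ y₁` minus products of nonnegative numbers. Each positive term is at most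
`X Y`, where `X` and `Y` bound the rows, so the left-hand side is at most
`A B + B C + C A ≤ (A + B + C) ^ 2`.
-/

lemma det_le_three_mul {x₁ x₂ x₃ y₁ y₂ y₃ X Y : ℝ}
    (hx₁ : 0 ≤ x₁) (hx₂ : 0 ≤ x₂) (hx₃ : 0 ≤ x₃)
    (hy₁ : 0 ≤ y₁) (hy₂ : 0 ≤ y₂) (hy₃ : 0 ≤ y₃)
    (hX₁ : x₁ ≤ X) (hX₂ : x₂ ≤ X) (hX₃ : x₃ ≤ X)
    (hY₁ : y₁ ≤ Y) (hY₂ : y₂ ≤ Y) (hY₃ : y₃ ≤ Y) :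
    (x₁ - x₃) * (y₂ - y₃) - (x₂ - x₃) * (y₁ - y₃) ≤ 3 * (X * Y) := by
  have hX : 0 ≤ X := hx₁.trans hX₁
  have h₁ : x₁ * y₂ ≤ X * Y := mul_le_mul hX₁ hY₂ hy₂ hX
  have h₂ : x₂ * y₃ ≤ X * Y := mul_le_mul hX₂ hY₃ hy₃ hX
  have h₃ : x₃ * y₁ ≤ X * Y := mul_le_mul hX₃ hY₁ hy₁ hX
  linarith [mul_nonneg hx₁ hy₃, mul_nonneg hx₂ hy₁, mul_nonneg hx₃ hy₂]

/-- The tropical invariant expression is bounded by (A+B+C)². -/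
theorem stmt3 (a₁ a₂ a₃ b₁ b₂ b₃ c₁ c₂ c₃ : ℝ)
    (ha₁ : 0 ≤ a₁) (ha₂ : 0 ≤ a₂) (ha₃ : 0 ≤ a₃)
    (hb₁ : 0 ≤ b₁) (hb₂ : 0 ≤ b₂) (hb₃ : 0 ≤ b₃)
    (hc₁ : 0 ≤ c₁) (hc₂ : 0 ≤ c₂) (hc₃ : 0 ≤ c₃) :
    (1 / 3) * ((a₁ - a₃) * (b₂ - b₃) - (a₂ - a₃) * (b₁ - b₃)
      + (b₁ - b₃) * (c₂ - c₃) - (b₂ - b₃) * (c₁ - c₃)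
      + (c₁ - c₃) * (a₂ - a₃) - (c₂ - c₃) * (a₁ - a₃))
    ≤ (max a₁ (max a₂ a₃) + max b₁ (max b₂ b₃) + max c₁ (max c₂ c₃)) ^ 2 := by
  have le₁ (x y z : ℝ) : x ≤ max x (max y z) := le_max_left _ _
  have le₂ (x y z : ℝ) : y ≤ max x (max y z) := (le_max_left _ _).trans (le_max_right _ _)
  have le₃ (x y z : ℝ) : z ≤ max x (max y z) := (le_max_right _ _).trans (le_max_right _ _)
  have hab := det_le_three_mul ha₁ ha₂ ha₃ hb₁ hb₂ hb₃ (le₁ a₁ a₂ a₃) (le₂ _ _ _) (le₃ _ _ _)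
    (le₁ b₁ b₂ b₃) (le₂ _ _ _) (le₃ _ _ _)
  have hbc := det_le_three_mul hb₁ hb₂ hb₃ hc₁ hc₂ hc₃ (le₁ b₁ b₂ b₃) (le₂ _ _ _) (le₃ _ _ _)
    (le₁ c₁ c₂ c₃) (le₂ _ _ _) (le₃ _ _ _)
  have hca := det_le_three_mul hc₁ hc₂ hc₃ ha₁ ha₂ ha₃ (le₁ c₁ c₂ c₃) (le₂ _ _ _) (le₃ _ _ _)
    (le₁ a₁ a₂ a₃) (le₂ _ _ _) (le₃ _ _ _)
  have hA : 0 ≤ max a₁ (max a₂ a₃) := ha₁.trans (le₁ _ _ _)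
  have hB : 0 ≤ max b₁ (max b₂ b₃) := hb₁.trans (le₁ _ _ _)
  have hC : 0 ≤ max c₁ (max c₂ c₃) := hc₁.trans (le₁ _ _ _)
  generalize max a₁ (max a₂ a₃) = A at *
  generalize max b₁ (max b₂ b₃) = B at *
  generalize max c₁ (max c₂ c₃) = C at *
  linarith [mul_nonneg hA hB, mul_nonneg hB hC, mul_nonneg hC hA, sq_nonneg A, sq_nonneg B,
    sq_nonneg C]
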